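/- Every GF² sentence is logically equivalent to a Boolean combination of sentences of the form ∀x φ(x), where φ(x) is an openGF² formula. -/

import Mathlib

/-! Core: relational two-variable first-order logic with equality (unary and
binary predicates only), the guarded fragment GF², structures, satisfaction,
atomic types, (bounded/delimited) guarded bisimulations, forest structures. -/

namespace GFC

inductive Var : Type
  | x
  | y
deriving DecidableEq

/-- Formulas of two-variable relational FO with equality (variables `x`, `y`). -/
inductive Fml (U B : Type) : Type
  | uatom : U → Var → Fml U B
  | batom : B → Var → Var → Fml U B
  | eqv   : Var → Var → Fml U B
  | fls   : Fml U B
  | neg   : Fml U B → Fml U B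
  | conj  : Fml U B → Fml U B → Fml U B
  | disj  : Fml U B → Fml U B → Fml U B
  | impl  : Fml U B → Fml U B → Fml U B
  | all   : Var → Fml U B → Fml U B
  | ex    : Var → Fml U B → Fml U B

namespace Fml

variable {U B : Type}

def free : Fml U B → Set Var
  | uatom _ v => {v}
  | batom _ v w => {v, w}
  | eqv v w => {v, w}
  | fls => ∅
  | neg φ => φ.free
  | conj φ ψ => φ.free ∪ ψ.free
  | disj φ ψ => φ.free ∪ ψ.free
  | impl φ ψ => φ.free ∪ ψ.free
  | all v φ => φ.free \ {v}
  | ex v φ => φ.free \ {v}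

def IsSentence (φ : Fml U B) : Prop := φ.free = ∅

def upreds : Fml U B → Set U
  | uatom P _ => {P}
  | batom _ _ _ => ∅
  | eqv _ _ => ∅
  | fls => ∅
  | neg φ => φ.upreds
  | conj φ ψ => φ.upreds ∪ ψ.upreds
  | disj φ ψ => φ.upreds ∪ ψ.upreds
  | impl φ ψ => φ.upreds ∪ ψ.upreds
  | all _ φ => φ.upreds
  | ex _ φ => φ.upreds

def bpreds : Fml U B → Set B
  | uatom _ _ => ∅
  | batom R _ _ => {R}
  | eqv _ _ => ∅
  | fls => ∅
  | neg φ => φ.bpreds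
  | conj φ ψ => φ.bpreds ∪ ψ.bpreds
  | disj φ ψ => φ.bpreds ∪ ψ.bpreds
  | impl φ ψ => φ.bpreds ∪ ψ.bpreds
  | all _ φ => φ.bpreds
  | ex _ φ => φ.bpreds

def IsAtom : Fml U B → Prop
  | uatom _ _ => True
  | batom _ _ _ => True
  | eqv _ _ => True
  | _ => False

def IsEqAtom : Fml U B → Prop
  | eqv _ _ => True
  | _ => False

/-- guarded quantifier depth (in GF² formulas every quantifier is guarded) -/
def gdepth : Fml U B → ℕ
  | uatom _ _ => 0
  | batom _ _ _ => 0
  | eqv _ _ => 0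
  | fls => 0
  | neg φ => φ.gdepth
  | conj φ ψ => max φ.gdepth ψ.gdepth
  | disj φ ψ => max φ.gdepth ψ.gdepth
  | impl φ ψ => max φ.gdepth ψ.gdepth
  | all _ φ => φ.gdepth + 1
  | ex _ φ => φ.gdepth + 1

/-- subformulas (including the formula itself) -/
def Subf : Fml U B → Set (Fml U B)
  | uatom P v => {uatom P v}
  | batom R v w => {batom R v w}
  | eqv v w => {eqv v w}
  | fls => {fls}
  | neg φ => insert (neg φ) φ.Subf
  | conj φ ψ => insert (conj φ ψ) (φ.Subf ∪ ψ.Subf)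
  | disj φ ψ => insert (disj φ ψ) (φ.Subf ∪ ψ.Subf)
  | impl φ ψ => insert (impl φ ψ) (φ.Subf ∪ ψ.Subf)
  | all v φ => insert (all v φ) φ.Subf
  | ex v φ => insert (ex v φ) φ.Subf

/-- rename the free variables along `f` (bound variables untouched) -/
def renameFree : (Var → Var) → Fml U B → Fml U B
  | f, uatom P v => uatom P (f v)
  | f, batom R v w => batom R (f v) (f w)
  | f, eqv v w => eqv (f v) (f w)
  | _, fls => fls
  | f, neg φ => neg (renameFree f φ)
  | f, conj φ ψ => conj (renameFree f φ) (renameFree f ψ)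
  | f, disj φ ψ => disj (renameFree f φ) (renameFree f ψ)
  | f, impl φ ψ => impl (renameFree f φ) (renameFree f ψ)
  | f, all v φ => all v (renameFree (Function.update f v v) φ)
  | f, ex v φ => ex v (renameFree (Function.update f v v) φ)

end Fml

/-- The two-variable guarded fragment GF²: quantification only in the guarded
patterns `∀v (α → φ)` and `∃v (α ∧ φ)` with `α` an atom containing all free
variables of `φ` as well as the quantified variable `v`. -/
inductive IsGF2 {U B : Type} : Fml U B → Prop
  | uatom (P : U) (v : Var) : IsGF2 (.uatom P v)
  | batom (R : B) (v w : Var) : IsGF2 (.batom R v w)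
  | eqv (v w : Var) : IsGF2 (.eqv v w)
  | fls : IsGF2 .fls
  | neg {φ} : IsGF2 φ → IsGF2 (.neg φ)
  | conj {φ ψ} : IsGF2 φ → IsGF2 ψ → IsGF2 (.conj φ ψ)
  | disj {φ ψ} : IsGF2 φ → IsGF2 ψ → IsGF2 (.disj φ ψ)
  | impl {φ ψ} : IsGF2 φ → IsGF2 ψ → IsGF2 (.impl φ ψ)
  | allG {v : Var} {α φ : Fml U B} :
      α.IsAtom → IsGF2 φ → φ.free ∪ {v} ⊆ α.free → IsGF2 (.all v (.impl α φ))
  | exG {v : Var} {α φ : Fml U B} :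
      α.IsAtom → IsGF2 φ → φ.free ∪ {v} ⊆ α.free → IsGF2 (.ex v (.conj α φ))

/-- openGF²: GF² formulas with exactly one free variable, in which equality is
never used as a guard and which contain no subformula that is a sentence. -/
def IsOpenGF2 {U B : Type} (φ : Fml U B) : Prop :=
  IsGF2 φ ∧ (∃ v, φ.free = {v}) ∧
  (∀ ψ ∈ φ.Subf, ¬ ψ.IsSentence) ∧
  (∀ ψ ∈ φ.Subf, ∀ (v : Var) (α χ : Fml U B),
      (ψ = .all v (.impl α χ) ∨ ψ = .ex v (.conj α χ)) → ¬ α.IsEqAtom)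

/-- relational structures interpreting unary predicates `U` and binary
predicates `B` -/
structure Str (U B : Type) where
  Dom : Type
  nonempty : Nonempty Dom
  u : U → Dom → Prop
  b : B → Dom → Dom → Prop

def upd {D : Type} (σ : Var → D) (v : Var) (d : D) : Var → D :=
  fun w => if w = v then d else σ w

def Sat {U B : Type} (A : Str U B) : Fml U B → (Var → A.Dom) → Prop
  | .uatom P v, σ => A.u P (σ v)
  | .batom R v w, σ => A.b R (σ v) (σ w)
  | .eqv v w, σ => σ v = σ w
  | .fls, _ => False
  | .neg φ, σ => ¬ Sat A φ σ
  | .conj φ ψ, σ => Sat A φ σ ∧ Sat A ψ σ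
  | .disj φ ψ, σ => Sat A φ σ ∨ Sat A ψ σ
  | .impl φ ψ, σ => Sat A φ σ → Sat A ψ σ
  | .all v φ, σ => ∀ d : A.Dom, Sat A φ (upd σ v d)
  | .ex v φ, σ => ∃ d : A.Dom, Sat A φ (upd σ v d)

/-- truth of a sentence in a structure -/
def SatS {U B : Type} (A : Str U B) (φ : Fml U B) : Prop := ∀ σ, Sat A φ σ

def Entails {U B : Type} (φ ψ : Fml U B) : Prop :=
  ∀ A : Str U B, SatS A φ → SatS A ψ

def Satisfiable {U B : Type} (φ : Fml U B) : Prop := ∃ A : Str U B, SatS A φ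

/-- a GF²(Σ)-sentence, for the signature Σ = (SU, SB) -/
def IsGF2Sentence {U B : Type} (SU : Set U) (SB : Set B) (ψ : Fml U B) : Prop :=
  IsGF2 ψ ∧ ψ.IsSentence ∧ ψ.upreds ⊆ SU ∧ ψ.bpreds ⊆ SB

/-- `φ₁ ⊨_Σ φ₂` : GF²(Σ)-entailment -/
def GF2Entails {U B : Type} (SU : Set U) (SB : Set B) (φ₁ φ₂ : Fml U B) : Prop :=
  ∀ ψ : Fml U B, IsGF2Sentence SU SB ψ → Entails φ₂ ψ → Entails φ₁ ψ

/-- atomic formulas in the variables x, y -/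
inductive Atom2 (U B : Type) : Type
  | ua : U → Var → Atom2 U B
  | ba : B → Var → Var → Atom2 U B

def vval {D : Type} (a a' : D) : Var → D
  | .x => a
  | .y => a'

def Atom2.inSig {U B : Type} (SU : Set U) (SB : Set B) : Atom2 U B → Prop
  | .ua P _ => P ∈ SU
  | .ba R _ _ => R ∈ SB

def Atom2.holds {U B : Type} (A : Str U B) (a a' : A.Dom) : Atom2 U B → Prop
  | .ua P v => A.u P (vval a a' v)
  | .ba R v w => A.b R (vval a a' v) (vval a a' w)

def Atom2.onlyX {U B : Type} : Atom2 U B → Prop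
  | .ua _ v => v = Var.x
  | .ba _ v w => v = Var.x ∧ w = Var.x

/-- the atomic 1-type of `a` for the signature `(SU, SB)` (the set of
Σ-atoms in the single variable x satisfied by `a`; this determines the set of
negated atoms as well) -/
def atp1 {U B : Type} (A : Str U B) (SU : Set U) (SB : Set B) (a : A.Dom) :
    Set (Atom2 U B) :=
  {α | α.onlyX ∧ α.inSig SU SB ∧ α.holds A a a}

/-- the atomic 2-type of `(a, a')` for the signature `(SU, SB)` (the set of
Σ-atoms in x, y satisfied by `(a, a')`; together with `a ≠ a'` this determines
the atomic 2-type) -/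
def atp2 {U B : Type} (A : Str U B) (SU : Set U) (SB : Set B) (a a' : A.Dom) :
    Set (Atom2 U B) :=
  {α | α.inSig SU SB ∧ α.holds A a a'}

/-- the atomic 2-type of `(a, a')` is guarded (contains `R x y` or `R y x`
for some binary `R ∈ SB`) -/
def Guarded2 {U B : Type} (A : Str U B) (SB : Set B) (a a' : A.Dom) : Prop :=
  ∃ R ∈ SB, A.b R a a' ∨ A.b R a' a

/-- GF²(Σ)-bisimulation between structures `A` and `Bm` -/
structure IsBisim {U B : Type} (A Bm : Str U B) (SU : Set U) (SB : Set B)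
    (Z : A.Dom → Bm.Dom → Prop) : Prop where
  atom_eq : ∀ {a b}, Z a b → atp1 A SU SB a = atp1 Bm SU SB b
  forth : ∀ {a b}, Z a b → ∀ a', a' ≠ a → Guarded2 A SB a a' →
      ∃ b', b' ≠ b ∧ atp2 A SU SB a a' = atp2 Bm SU SB b b' ∧ Z a' b'
  back : ∀ {a b}, Z a b → ∀ b', b' ≠ b → Guarded2 Bm SB b b' →
      ∃ a', a' ≠ a ∧ atp2 A SU SB a a' = atp2 Bm SU SB b b' ∧ Z a' b'

/-- `(A, a) ∼_Σ (Bm, b)` -/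
def Bisim {U B : Type} (A Bm : Str U B) (SU : Set U) (SB : Set B)
    (a : A.Dom) (b : Bm.Dom) : Prop :=
  ∃ Z, IsBisim A Bm SU SB Z ∧ Z a b

/-- `(A, a) ∼ᵏ_Σ (Bm, b)` : k-GF²(Σ)-bisimilarity -/
def KBisim {U B : Type} (A Bm : Str U B) (SU : Set U) (SB : Set B) :
    ℕ → A.Dom → Bm.Dom → Prop
  | 0, a, b => atp1 A SU SB a = atp1 Bm SU SB b
  | k+1, a, b => atp1 A SU SB a = atp1 Bm SU SB b ∧
      (∀ a', a' ≠ a → Guarded2 A SB a a' →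
        ∃ b', b' ≠ b ∧ atp2 A SU SB a a' = atp2 Bm SU SB b b' ∧
          KBisim A Bm SU SB k a' b') ∧
      (∀ b', b' ≠ b → Guarded2 Bm SB b b' →
        ∃ a', a' ≠ a ∧ atp2 A SU SB a a' = atp2 Bm SU SB b b' ∧
          KBisim A Bm SU SB k a' b')

/-- a (full-signature) atomic 2-type, given as its set of positive atoms,
is guarded -/
def Guarded2Type {U B : Type} (τ : Set (Atom2 U B)) : Prop :=
  ∃ R : B, Atom2.ba R Var.x Var.y ∈ τ ∨ Atom2.ba R Var.y Var.x ∈ τ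

/-- successor-saturated structures -/
def SuccSaturated {U B : Type} (A : Str U B) : Prop :=
  ∀ (a : A.Dom) (τ : Set (Atom2 U B)) (Γ : Set (Fml U B)),
    Guarded2Type τ →
    (∀ ψ ∈ Γ, IsOpenGF2 ψ ∧ ψ.free = {Var.x}) →
    (∀ Γ' : Finset (Fml U B), ↑Γ' ⊆ Γ →
      ∃ a', a' ≠ a ∧ atp2 A Set.univ Set.univ a a' = τ ∧
        ∀ ψ ∈ Γ', Sat A ψ (fun _ => a')) →
    ∃ b', b' ≠ a ∧ atp2 A Set.univ Set.univ a b' = τ ∧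
      ∀ ψ ∈ Γ, Sat A ψ (fun _ => b')

/-- finite outdegree: every element stands in a guarded atomic 2-type (for the
full signature) to only finitely many elements -/
def FiniteOutdeg {U B : Type} (A : Str U B) : Prop :=
  ∀ a : A.Dom, {a' | a' ≠ a ∧ ∃ R : B, A.b R a a' ∨ A.b R a' a}.Finite

/-- Σ-adjacency (edges of the Gaifman graph of the Σ-reduct) -/
def SigAdj {U B : Type} (A : Str U B) (SB : Set B) (a a' : A.Dom) : Prop :=
  a ≠ a' ∧ ∃ R ∈ SB, A.b R a a' ∨ A.b R a' a

/-- A forest structure: a structure whose Gaifman graph is a forest, directed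
by choosing a root for each tree; `parent p c` says that `p` is the
predecessor (parent) of `c`. -/
structure Forest (U B : Type) extends Str U B where
  parent : Dom → Dom → Prop
  parent_unique : ∀ {c p p' : Dom}, parent p c → parent p' c → p = p'
  parent_wf : WellFounded parent
  adj_iff : ∀ a a' : Dom,
    (a ≠ a' ∧ ∃ R : B, b R a a' ∨ b R a' a) ↔ (parent a a' ∨ parent a' a)

namespace Forest

variable {U B : Type}

/-- `a` together with its descendants -/
def desc (F : Forest U B) (a : F.Dom) : Set F.Dom :=
  {c | Relation.ReflTransGen F.parent a c}

/-- the subtrees rooted at `a` and at `a'` are isomorphic -/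
def SubtreeIso (F : Forest U B) (a a' : F.Dom) : Prop :=
  ∃ f : (F.desc a) ≃ (F.desc a'),
    (f ⟨a, Relation.ReflTransGen.refl⟩).val = a' ∧
    (∀ c d : F.desc a, F.parent c.val d.val ↔ F.parent (f c).val (f d).val) ∧
    (∀ (P : U) (c : F.desc a), F.u P c.val ↔ F.u P (f c).val) ∧
    (∀ (R : B) (c d : F.desc a), F.b R c.val d.val ↔ F.b R (f c).val (f d).val)

/-- regular: only finitely many subtrees up to isomorphism -/
def Regular (F : Forest U B) : Prop :=
  ∃ S : Set F.Dom, S.Finite ∧ ∀ a, ∃ a' ∈ S, F.SubtreeIso a' a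

/-- `a ≺ a'` : `a` and `a'` lie in the same Σ-tree and `a` is a proper
ancestor of `a'` -/
def prec (F : Forest U B) (SB : Set B) (a a' : F.Dom) : Prop :=
  Relation.ReflTransGen (SigAdj F.toStr SB) a a' ∧ Relation.TransGen F.parent a a'

end Forest

/-- `a_⊥`-delimited GF²(Σ)-bisimulation: like a GF²(Σ)-bisimulation except that
the back-and-forth conditions are not required at pairs whose first component
is `abot` -/
structure IsPtDelimBisim {U B : Type} (A Bm : Str U B) (SU : Set U) (SB : Set B)
    (abot : A.Dom) (Z : A.Dom → Bm.Dom → Prop) : Prop where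
  atom_eq : ∀ {a b}, Z a b → atp1 A SU SB a = atp1 Bm SU SB b
  forth : ∀ {a b}, Z a b → a ≠ abot → ∀ a', a' ≠ a → Guarded2 A SB a a' →
      ∃ b', b' ≠ b ∧ atp2 A SU SB a a' = atp2 Bm SU SB b b' ∧ Z a' b'
  back : ∀ {a b}, Z a b → a ≠ abot → ∀ b', b' ≠ b → Guarded2 Bm SB b b' →
      ∃ a', a' ≠ a ∧ atp2 A SU SB a a' = atp2 Bm SU SB b b' ∧ Z a' b'

/-- `(A, a) ∼^{a_⊥}_Σ (Bm, b)` -/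
def PtDelimBisim {U B : Type} (A Bm : Str U B) (SU : Set U) (SB : Set B)
    (abot : A.Dom) (a : A.Dom) (b : Bm.Dom) : Prop :=
  ∃ Z, IsPtDelimBisim A Bm SU SB abot Z ∧ Z a b

/-- `A_⊥`-delimited GF²(Σ)-bisimulation between a forest structure `F` and a
structure `Bm`, given by a pair of relations `Z0 (∼⁰)` and `Z1 (∼¹)`. -/
structure IsDelimBisim {U B : Type} (F : Forest U B) (Bm : Str U B)
    (SU : Set U) (SB : Set B) (Abot : Set F.Dom)
    (Z0 Z1 : F.Dom → Bm.Dom → Prop) : Prop where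
  zero : ∀ {a b}, Z0 a b →
    atp1 F.toStr SU SB a = atp1 Bm SU SB b ∧
    (∀ a', a' ≠ a → Guarded2 F.toStr SB a a' →
      ∃ b', b' ≠ b ∧
        ((F.parent a' a ∧ a' ∈ Abot) → Z1 a' b') ∧
        (¬ (F.parent a' a ∧ a' ∈ Abot) → Z0 a' b')) ∧
    (∀ b', b' ≠ b → Guarded2 Bm SB b b' →
      ∃ a', a' ≠ a ∧
        ((F.parent a' a ∧ a' ∈ Abot) → Z1 a' b') ∧
        (¬ (F.parent a' a ∧ a' ∈ Abot) → Z0 a' b'))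
  one : ∀ {a b}, Z1 a b → (∀ p, F.parent p a → p ∉ Abot) →
    atp1 F.toStr SU SB a = atp1 Bm SU SB b ∧
    (∀ a', a' ≠ a → Guarded2 F.toStr SB a a' →
      ∃ b', b' ≠ b ∧
        ((F.parent a a' ∧ a ∈ Abot) → Z0 a' b') ∧
        (¬ (F.parent a a' ∧ a ∈ Abot) → Z1 a' b')) ∧
    (∀ b', b' ≠ b → Guarded2 Bm SB b b' →
      ∃ a', a' ≠ a ∧
        ((F.parent a a' ∧ a ∈ Abot) → Z0 a' b') ∧
        (¬ (F.parent a a' ∧ a ∈ Abot) → Z1 a' b'))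

/-- `(F, a) ∼^{A_⊥}_Σ (Bm, b)` -/
def DelimBisim {U B : Type} (F : Forest U B) (Bm : Str U B)
    (SU : Set U) (SB : Set B) (Abot : Set F.Dom) (a : F.Dom) (b : Bm.Dom) : Prop :=
  ∃ Z0 Z1, IsDelimBisim F Bm SU SB Abot Z0 Z1 ∧ Z0 a b

/-- `cl φ` : the subformulas of `φ` closed under single negation and renaming
of free variables (among x, y) -/
def clSet {U B : Type} (φ : Fml U B) : Set (Fml U B) :=
  {χ | ∃ ψ ∈ φ.Subf, ∃ f : Var → Var,
      χ = ψ.renameFree f ∨ χ = .neg (ψ.renameFree f)}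

/-- a 1-type for `φ₂`: a set of formulas `ψ(x)` from `cl φ₂` such that
`φ₂ ∧ ∃x ⋀ t(x)` is satisfiable -/
def OneType {U B : Type} (φ₂ : Fml U B) (t : Set (Fml U B)) : Prop :=
  t ⊆ clSet φ₂ ∧ (∀ ψ ∈ t, ψ.free ⊆ {Var.x}) ∧
  ∃ (A : Str U B) (a : A.Dom), SatS A φ₂ ∧ ∀ ψ ∈ t, Sat A ψ (fun _ => a)

/-- `tp_Bm(b)` : the 1-type of `b` in `Bm` (w.r.t. `φ₂`) -/
def tpOf {U B : Type} (Bm : Str U B) (φ₂ : Fml U B) (b : Bm.Dom) :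
    Set (Fml U B) :=
  {ψ | ψ ∈ clSet φ₂ ∧ ψ.free ⊆ {Var.x} ∧ Sat Bm ψ (fun _ => b)}

end GFC

namespace GFC

/-- Boolean combinations of sentences from `S` -/
inductive BoolComb {U B : Type} (S : Set (Fml U B)) : Fml U B → Prop
  | base {φ} : φ ∈ S → BoolComb S φ
  | neg {φ} : BoolComb S φ → BoolComb S (.neg φ)
  | conj {φ ψ} : BoolComb S φ → BoolComb S ψ → BoolComb S (.conj φ ψ)
  | disj {φ ψ} : BoolComb S φ → BoolComb S ψ → BoolComb S (.disj φ ψ)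

abbrev UOpen (U B : Type) : Set (Fml U B) :=
  {χ | ∃ θ : Fml U B, IsOpenGF2 θ ∧ θ.free = {Var.x} ∧ χ = .all Var.x θ}

inductive Nice {U B : Type} : Fml U B → Prop
  | uatom (P : U) (v : Var) : Nice (.uatom P v)
  | batom (R : B) (v w : Var) : Nice (.batom R v w)
  | eqv (v w : Var) : Nice (.eqv v w)
  | neg {φ} : Nice φ → Nice (.neg φ)
  | impl {φ ψ} : Nice φ → Nice ψ → Nice (.impl φ ψ)
  | all (v : Var) (R : B) (a b : Var) {φ} : a ≠ b → Nice φ →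
      Nice (.all v (.impl (.batom R a b) φ))

theorem sat_congr {U B : Type} (A : Str U B) (φ : Fml U B) :
    ∀ σ τ : Var → A.Dom, (∀ v ∈ φ.free, σ v = τ v) → (Sat A φ σ ↔ Sat A φ τ) := by
  induction φ with
  | uatom P v => intro σ τ h; simp [Fml.free] at h; simp [Sat, h]
  | batom P v w => intro σ τ h; simp [Fml.free] at h; simp [Sat, h]
  | eqv v w => intro σ τ h; simp [Fml.free] at h; simp [Sat, h]
  | fls => intro σ τ h; simp [Sat]
  | neg φ ih => intro σ τ h; simp only [Sat]; rw [ih σ τ h]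
  | conj φ ψ ih1 ih2 =>
    intro σ τ h; simp only [Sat]
    rw [ih1 σ τ (fun v hv => h v (Or.inl hv)), ih2 σ τ (fun v hv => h v (Or.inr hv))]
  | disj φ ψ ih1 ih2 =>
    intro σ τ h; simp only [Sat]
    rw [ih1 σ τ (fun v hv => h v (Or.inl hv)), ih2 σ τ (fun v hv => h v (Or.inr hv))]
  | impl φ ψ ih1 ih2 =>
    intro σ τ h; simp only [Sat]
    rw [ih1 σ τ (fun v hv => h v (Or.inl hv)), ih2 σ τ (fun v hv => h v (Or.inr hv))]
  | all v φ ih =>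
    intro σ τ h; simp only [Sat]
    refine forall_congr' fun d => ih _ _ fun w hw => ?_
    by_cases hwv : w = v
    · simp [upd, hwv]
    · simp only [upd, hwv, if_false]; exact h w ⟨hw, hwv⟩
  | ex v φ ih =>
    intro σ τ h; simp only [Sat]
    refine exists_congr fun d => ih _ _ fun w hw => ?_
    by_cases hwv : w = v
    · simp [upd, hwv]
    · simp only [upd, hwv, if_false]; exact h w ⟨hw, hwv⟩

def sw : Var → Var
  | .x => .y
  | .y => .x

theorem sw_sw (v : Var) : sw (sw v) = v := by cases v <;> rfl

theorem sw_inj {v w : Var} : sw v = sw w ↔ v = w := by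
  cases v <;> cases w <;> simp [sw]

theorem eq_or_sw (v w : Var) : w = v ∨ w = sw v := by
  cases v <;> cases w <;> simp [sw]

theorem sw_ne (v : Var) : sw v ≠ v := by cases v <;> simp [sw]

def swF {U B : Type} : Fml U B → Fml U B
  | .uatom P v => .uatom P (sw v)
  | .batom R v w => .batom R (sw v) (sw w)
  | .eqv v w => .eqv (sw v) (sw w)
  | .fls => .fls
  | .neg φ => .neg (swF φ)
  | .conj φ ψ => .conj (swF φ) (swF ψ)
  | .disj φ ψ => .disj (swF φ) (swF ψ)
  | .impl φ ψ => .impl (swF φ) (swF ψ)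
  | .all v φ => .all (sw v) (swF φ)
  | .ex v φ => .ex (sw v) (swF φ)

theorem upd_sw {D : Type} (σ : Var → D) (v : Var) (d : D) :
    (fun w => upd σ (sw v) d (sw w)) = upd (fun w => σ (sw w)) v d := by
  funext w; simp [upd, sw_inj]

theorem sat_swF {U B : Type} (A : Str U B) (φ : Fml U B) :
    ∀ σ : Var → A.Dom, Sat A (swF φ) σ ↔ Sat A φ (fun w => σ (sw w)) := by
  induction φ <;> intro σ <;> simp_all [Sat, swF, upd_sw]

theorem Nice.sw {U B : Type} {φ : Fml U B} (h : Nice φ) : Nice (swF φ) := by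
  induction h with
  | all v R a b hab _ ih => exact Nice.all _ _ _ _ (by simpa [sw_inj] using hab) ih
  | _ => constructor <;> assumption

theorem Nice.nonempty {U B : Type} {φ : Fml U B} (h : Nice φ) : φ.free.Nonempty := by
  induction h with
  | uatom P v => exact ⟨v, by simp [Fml.free]⟩
  | batom P v w => exact ⟨v, by simp [Fml.free]⟩
  | eqv v w => exact ⟨v, by simp [Fml.free]⟩
  | neg _ ih => exact ih
  | impl _ _ ih _ => exact ih.mono (fun _ h => Or.inl h)
  | all v R a b hab _ ih =>
    refine ⟨GFC.sw v, ?_, by simpa using sw_ne v⟩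
    left
    revert hab
    cases a <;> cases b <;> cases v <;> simp [Fml.free, GFC.sw]

theorem pair_univ {a b : Var} (h : a ≠ b) : ({a, b} : Set Var) = Set.univ := by
  ext w; revert h; cases a <;> cases b <;> cases w <;> simp

theorem Nice.gf2 {U B : Type} {φ : Fml U B} (h : Nice φ) : IsGF2 φ := by
  induction h with
  | all v R a b hab _ ih =>
    refine IsGF2.allG trivial ih ?_
    rw [Fml.free, pair_univ hab]; exact Set.subset_univ _
  | _ => constructor <;> assumption

theorem Nice.nosent {U B : Type} {φ : Fml U B} (h : Nice φ) :
    ∀ ψ ∈ φ.Subf, ψ.free.Nonempty := by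
  induction h with
  | uatom P v => rintro _ rfl; exact (Nice.uatom P v).nonempty
  | batom P v w => rintro _ rfl; exact (Nice.batom P v w).nonempty
  | eqv v w => rintro _ rfl; exact (Nice.eqv v w).nonempty
  | neg h ih =>
    rintro ψ (rfl | h')
    · exact h.neg.nonempty
    · exact ih _ h'
  | impl h1 h2 ih1 ih2 =>
    rintro ψ (rfl | h' | h')
    · exact (h1.impl h2).nonempty
    · exact ih1 _ h'
    · exact ih2 _ h'
  | all v R a b hab h ih =>
    rintro ψ (rfl | rfl | rfl | h')
    · exact (Nice.all v R a b hab h).nonempty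
    · exact ((Nice.batom R a b).impl h).nonempty
    · exact (Nice.batom R a b).nonempty
    · exact ih _ h'

theorem Nice.noeq {U B : Type} {φ : Fml U B} (h : Nice φ) :
    ∀ ψ ∈ φ.Subf, ∀ (v : Var) (α χ : Fml U B),
      (ψ = .all v (.impl α χ) ∨ ψ = .ex v (.conj α χ)) → ¬ α.IsEqAtom := by
  induction h with
  | uatom P v => rintro _ rfl; simp
  | batom P v w => rintro _ rfl; simp
  | eqv v w => rintro _ rfl; simp
  | neg h ih =>
    rintro ψ (rfl | h')
    · simp
    · exact ih _ h'
  | impl h1 h2 ih1 ih2 =>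
    rintro ψ (rfl | h' | h')
    · simp
    · exact ih1 _ h'
    · exact ih2 _ h'
  | all v R a b hab h ih =>
    rintro ψ (rfl | rfl | rfl | h')
    · rintro v' α χ (h1 | h1)
      · injection h1 with _ h2
        injection h2 with h3 _
        subst h3; simp [Fml.IsEqAtom]
      · cases h1
    · simp
    · simp
    · exact ih _ h'

theorem Nice.isOpen {U B : Type} {φ : Fml U B} (h : Nice φ) {v : Var} (hf : φ.free ⊆ {v}) :
    IsOpenGF2 φ ∧ φ.free = {v} := by
  have e : φ.free = {v} := (Set.subset_singleton_iff_eq.1 hf).resolve_left h.nonempty.ne_empty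
  refine ⟨⟨h.gf2, ⟨v, e⟩, ?_, h.noeq⟩, e⟩
  intro ψ hψ hs
  exact (h.nosent ψ hψ).ne_empty hs

/-- substitute `w` for both variables -/
def sub {U B : Type} (w : Var) : Fml U B → Fml U B
  | .uatom P _ => .uatom P w
  | .batom R _ _ => .batom R w w
  | .eqv _ _ => .eqv w w
  | .fls => .fls
  | .neg φ => .neg (sub w φ)
  | .conj φ ψ => .conj (sub w φ) (sub w ψ)
  | .disj φ ψ => .disj (sub w φ) (sub w ψ)
  | .impl φ ψ => .impl (sub w φ) (sub w ψ)
  | .all v φ => if v = w then swF (.all v φ) else .all v φ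
  | .ex v φ => if v = w then swF (.ex v φ) else .ex v φ

theorem sat_sub {U B : Type} (A : Str U B) (w : Var) {φ : Fml U B} (h : Nice φ) :
    ∀ σ : Var → A.Dom, Sat A (sub w φ) σ ↔ Sat A φ (fun _ => σ w) := by
  induction h with
  | uatom | batom | eqv => intro σ; simp [sub, Sat]
  | neg _ ih => intro σ; simp [sub, Sat, ih]
  | impl _ _ ih ih' => intro σ; simp [sub, Sat, ih, ih']
  | all v R a b hab h ih =>
    intro σ
    rw [sub]
    split_ifs with hv
    · rw [sat_swF]
      refine sat_congr A _ _ _ fun u hu => ?_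
      rcases eq_or_sw v u with rfl | rfl
      · exact absurd rfl hu.2
      · simp [sw_sw, hv]
    · refine sat_congr A _ _ _ fun u hu => ?_
      rcases eq_or_sw w u with rfl | rfl
      · rfl
      · rcases eq_or_sw w v with rfl | rfl
        · exact absurd rfl hv
        · exact absurd rfl hu.2

theorem Nice.sub {U B : Type} {φ : Fml U B} (h : Nice φ) (w : Var) :
    Nice (sub w φ) ∧ (GFC.sub w φ).free ⊆ {w} := by
  induction h with
  | uatom P v => exact ⟨.uatom _ _, by simp [GFC.sub, Fml.free]⟩
  | batom P v v' => exact ⟨.batom _ _ _, by simp [GFC.sub, Fml.free]⟩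
  | eqv v v' => exact ⟨.eqv _ _, by simp [GFC.sub, Fml.free]⟩
  | neg _ ih => exact ⟨ih.1.neg, ih.2⟩
  | impl _ _ ih ih' => exact ⟨ih.1.impl ih'.1, Set.union_subset ih.2 ih'.2⟩
  | all v R a b hab h ih =>
    rw [GFC.sub]
    split_ifs with hv
    · refine ⟨(Nice.all v R a b hab h).sw, ?_⟩
      rintro u ⟨_, hu⟩
      subst hv
      rcases eq_or_sw v u with rfl | rfl
      · rfl
      · exact absurd rfl hu
    · refine ⟨Nice.all v R a b hab h, ?_⟩
      rintro u ⟨_, hu⟩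
      rcases eq_or_sw w v with rfl | rfl
      · exact absurd rfl hv
      · rcases eq_or_sw w u with rfl | rfl
        · rfl
        · exact absurd rfl hu

theorem bc_congr {U B : Type} {s : Fml U B} (h : BoolComb (UOpen U B) s) (A : Str U B) :
    ∀ σ τ : Var → A.Dom, Sat A s σ ↔ Sat A s τ := by
  induction h with
  | base h =>
    obtain ⟨θ, _, hf, rfl⟩ := h
    intro σ τ
    refine sat_congr A _ _ _ fun v hv => ?_
    simp [Fml.free, hf] at hv
  | neg _ ih => intro σ τ; simp only [Sat]; rw [ih σ τ]
  | conj _ _ ih ih' => intro σ τ; simp only [Sat]; rw [ih σ τ, ih' σ τ]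
  | disj _ _ ih ih' => intro σ τ; simp only [Sat]; rw [ih σ τ, ih' σ τ]

theorem bc_sat {U B : Type} {s : Fml U B} (h : BoolComb (UOpen U B) s) (A : Str U B)
    (σ : Var → A.Dom) : SatS A s ↔ Sat A s σ :=
  ⟨fun k => k σ, fun k τ => (bc_congr h A σ τ).1 k⟩

inductive Dec {U B : Type} (V : Set Var) : (∀ A : Str U B, (Var → A.Dom) → Prop) → Prop
  | leaf {θ} : Nice θ → θ.free ⊆ V → Dec V (fun A σ => Sat A θ σ)
  | ite {s F G} : BoolComb (UOpen U B) s → Dec V F → Dec V G →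
      Dec V (fun A σ => (SatS A s ∧ F A σ) ∨ (¬ SatS A s ∧ G A σ))

theorem Dec.cg {U B : Type} {V : Set Var} {F G : ∀ A : Str U B, (Var → A.Dom) → Prop}
    (h : Dec V F) (e : ∀ A σ, F A σ ↔ G A σ) : Dec V G := by
  have : F = G := by funext A σ; exact propext (e A σ)
  exact this ▸ h

theorem Dec.mono {U B : Type} {V W : Set Var} {F : ∀ A : Str U B, (Var → A.Dom) → Prop}
    (h : Dec V F) (e : V ⊆ W) : Dec W F := by
  induction h with
  | leaf h hf => exact .leaf h (hf.trans e)
  | ite hs _ _ ih ih' => exact .ite hs ih ih'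

theorem Dec.neg {U B : Type} {V : Set Var} {F : ∀ A : Str U B, (Var → A.Dom) → Prop}
    (h : Dec V F) : Dec V (fun A σ => ¬ F A σ) := by
  induction h with
  | leaf h hf => exact .leaf h.neg hf
  | ite hs _ _ ih ih' => exact (Dec.ite hs ih ih').cg fun A σ => by tauto

theorem Dec.impl {U B : Type} {V : Set Var} {F G : ∀ A : Str U B, (Var → A.Dom) → Prop}
    (h : Dec V F) (h' : Dec V G) : Dec V (fun A σ => F A σ → G A σ) := by
  induction h with
  | leaf h hf =>
    induction h' with
    | leaf h' hf' => exact .leaf (h.impl h') (Set.union_subset hf hf')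
    | ite hs _ _ ih ih' => exact (Dec.ite hs ih ih').cg fun A σ => by tauto
  | ite hs _ _ ih ih' => exact (Dec.ite hs ih ih').cg fun A σ => by tauto

theorem Dec.diag {U B : Type} {V : Set Var} {F : ∀ A : Str U B, (Var → A.Dom) → Prop}
    (h : Dec V F) (w : Var) : Dec {w} (fun A σ => F A (fun _ => σ w)) := by
  induction h with
  | leaf h hf => exact (Dec.leaf (h.sub w).1 (h.sub w).2).cg fun A σ => sat_sub A w h σ
  | ite hs _ _ ih ih' => exact Dec.ite hs ih ih'

theorem Dec.tru {U B : Type} (w : Var) :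
    Dec (U := U) (B := B) {w} (fun _ _ => True) :=
  (Dec.leaf (Nice.eqv w w) (by simp [Fml.free])).cg fun A σ => by simp [Sat]

theorem Dec.all2 {U B : Type} {V : Set Var} {F : ∀ A : Str U B, (Var → A.Dom) → Prop}
    (h : Dec V F) (v : Var) (R : B) {a b : Var} (hab : a ≠ b) :
    Dec {sw v} (fun A σ => ∀ d, Sat A (.batom R a b) (upd σ v d) → F A (upd σ v d)) := by
  induction h with
  | leaf h hf =>
    refine Dec.leaf (Nice.all v R a b hab h) ?_
    rintro u ⟨_, hu⟩
    rcases eq_or_sw v u with rfl | rfl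
    · exact absurd rfl hu
    · rfl
  | @ite s F G hs _ _ ih ih' =>
    refine (Dec.ite hs ih ih').cg fun A σ => ?_
    by_cases k : SatS A s <;> simp [k]

theorem const_upd_x {D : Type} (σ : Var → D) (d : D) : upd σ Var.x d Var.x = d := by
  simp [upd]

theorem Dec.all1 {U B : Type} {F : ∀ A : Str U B, (Var → A.Dom) → Prop} {v : Var}
    (h : Dec {v} F) (w : Var) : Dec {w} (fun A σ => ∀ d, F A (upd σ v d)) := by
  induction h with
  | @leaf θ h hf =>
    have ho := (h.sub Var.x).1.isOpen (h.sub Var.x).2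
    have hs : BoolComb (UOpen U B) (.all Var.x (GFC.sub Var.x θ)) :=
      .base ⟨_, ho.1, ho.2, rfl⟩
    refine (Dec.ite hs (Dec.tru w) (Dec.tru w).neg).cg fun A σ => ?_
    rw [bc_sat hs A σ]
    simp only [Sat, sat_sub A _ h, const_upd_x, not_true, and_false, or_false, and_true]
    refine forall_congr' fun d => sat_congr A _ _ _ fun u hu => ?_
    have := hf hu
    simp only [Set.mem_singleton_iff] at this
    simp [upd, this]
  | @ite s F G hs _ _ ih ih' =>
    refine (Dec.ite hs ih ih').cg fun A σ => ?_
    by_cases k : SatS A s <;> simp [k]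

theorem Dec.toBC {U B : Type} {F : ∀ A : Str U B, (Var → A.Dom) → Prop}
    (h : Dec {Var.x} F) : ∃ ψ, BoolComb (UOpen U B) ψ ∧
      ∀ A : Str U B, (∀ σ, F A σ) ↔ SatS A ψ := by
  induction h with
  | @leaf θ h hf =>
    have ho := h.isOpen hf
    refine ⟨.all Var.x θ, .base ⟨_, ho.1, ho.2, rfl⟩, fun A => ⟨fun k σ d => k _, fun k σ => ?_⟩⟩
    refine (sat_congr A _ _ _ fun u hu => ?_).1 (k σ (σ Var.x))
    have := hf hu
    simp only [Set.mem_singleton_iff] at this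
    simp [upd, this]
  | @ite s F G hs _ _ ih ih' =>
    obtain ⟨p, hp, ep⟩ := ih
    obtain ⟨q, hq, eq⟩ := ih'
    have hb := (hs.conj hp).disj (hs.neg.conj hq)
    refine ⟨_, hb, fun A => ?_⟩
    obtain ⟨d⟩ := A.nonempty
    rw [bc_sat hb A (fun _ => d)]
    simp only [Sat]
    rw [← bc_sat hs, ← bc_sat hp, ← bc_sat hq, ← ep, ← eq]
    by_cases k : SatS A s <;> simp [k]

theorem dec_all {U B : Type} {v : Var} {α φ : Fml U B} (hα : α.IsAtom)
    {F : ∀ A : Str U B, (Var → A.Dom) → Prop}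
    (ih : ∀ w, φ.free ⊆ {w} → Dec {w} F) (ihu : Dec Set.univ F)
    (hf : φ.free ∪ {v} ⊆ α.free) (V : Set Var) (hV : V.Nonempty) (hs : α.free \ {v} ⊆ V) :
    Dec V (fun A σ => ∀ d, Sat A α (upd σ v d) → F A (upd σ v d)) := by
  have hvα : v ∈ α.free := hf (Or.inr rfl)
  have hφ : φ.free ⊆ α.free := fun _ h => hf (Or.inl h)
  have hNα : Nice α := by
    cases α <;> first | exact hα.elim | constructor
  by_cases h1 : α.free ⊆ {v}
  · obtain ⟨w, hw⟩ := hV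
    exact (((Dec.leaf hNα h1).impl (ih v (hφ.trans h1))).all1 w).mono (by simpa using hw)
  · have hwα : sw v ∈ α.free := by
      obtain ⟨u, hu, hne⟩ := Set.not_subset.1 h1
      rcases eq_or_sw v u with rfl | rfl
      · exact absurd rfl hne
      · exact hu
    have hwV : ({sw v} : Set Var) ⊆ V := by
      simpa using hs ⟨hwα, sw_ne v⟩
    refine Dec.mono ?_ hwV
    cases α with
    | uatom P u =>
      simp only [Fml.free, Set.mem_singleton_iff] at hvα hwα
      exact absurd (hwα.trans hvα.symm) (sw_ne v)
    | batom R a b =>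
      refine ihu.all2 v R ?_
      rintro rfl
      simp only [Fml.free, Set.mem_singleton_iff, Set.pair_eq_singleton] at hvα hwα
      exact absurd (hwα.trans hvα.symm) (sw_ne v)
    | eqv a b =>
      have hab : a ≠ b := by
        rintro rfl
        simp only [Fml.free, Set.mem_singleton_iff, Set.pair_eq_singleton] at hvα hwα
        exact absurd (hwα.trans hvα.symm) (sw_ne v)
      refine (ihu.diag (sw v)).cg fun A σ => ?_
      have e : ∀ d, Sat A (.eqv a b) (upd σ v d) ↔ d = σ (sw v) := by
        intro d
        revert hab
        cases a <;> cases b <;> cases v <;> simp [Sat, upd, sw, eq_comm]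
      have e2 : upd σ v (σ (sw v)) = fun _ => σ (sw v) := by
        funext u
        rcases eq_or_sw v u with rfl | rfl <;> simp [upd]
      simp [e, e2]
    | _ => exact hα.elim

theorem dec_main {U B : Type} {φ : Fml U B} (h : IsGF2 φ) :
    ∀ V : Set Var, V.Nonempty → φ.free ⊆ V → Dec V (fun A σ => Sat A φ σ) := by
  induction h with
  | uatom P v => intro V _ hf; exact .leaf (.uatom P v) hf
  | batom P v w => intro V _ hf; exact .leaf (.batom P v w) hf
  | eqv v w => intro V _ hf; exact .leaf (.eqv v w) hf
  | fls =>
    rintro V ⟨w, hw⟩ _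
    exact ((Dec.tru w).neg.mono (by simpa using hw)).cg fun A σ => by simp [Sat]
  | neg _ ih => intro V hV hf; exact (ih V hV hf).neg
  | impl _ _ ih ih' =>
    intro V hV hf
    exact (ih V hV fun _ h => hf (Or.inl h)).impl (ih' V hV fun _ h => hf (Or.inr h))
  | conj _ _ ih ih' =>
    intro V hV hf
    exact ((ih V hV fun _ h => hf (Or.inl h)).impl
      (ih' V hV fun _ h => hf (Or.inr h)).neg).neg.cg fun A σ => by simp only [Sat]; tauto
  | disj _ _ ih ih' =>
    intro V hV hf
    exact ((ih V hV fun _ h => hf (Or.inl h)).neg.impl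
      (ih' V hV fun _ h => hf (Or.inr h))).cg fun A σ => by simp only [Sat]; tauto
  | allG hα _ hf ih =>
    intro V hV hs
    exact dec_all hα (fun w hw => ih _ ⟨w, rfl⟩ hw) (ih Set.univ ⟨Var.x, trivial⟩ (Set.subset_univ _))
      hf V hV (fun u hu => hs ⟨Or.inl hu.1, hu.2⟩)
  | exG hα _ hf ih =>
    intro V hV hs
    refine (dec_all hα (fun w hw => (ih {w} ⟨w, rfl⟩ hw).neg)
      (ih Set.univ ⟨Var.x, trivial⟩ (Set.subset_univ _)).neg
      hf V hV (fun u hu => hs ⟨Or.inl hu.1, hu.2⟩)).neg.cg fun A σ => ?_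
    simp [Sat]

/-- Every GF² sentence is logically equivalent to a Boolean
combination of sentences of the form `∀x φ(x)` with `φ(x)` an openGF² formula. -/
theorem every_gf2_sentence_equiv_boolComb_of_universal_open
    {U B : Type} (φ : Fml U B) (hgf : IsGF2 φ) (hsen : φ.IsSentence) :
    ∃ ψ : Fml U B,
      BoolComb {χ | ∃ θ : Fml U B, IsOpenGF2 θ ∧ θ.free = {Var.x} ∧
                    χ = .all Var.x θ} ψ ∧
      (∀ A : Str U B, SatS A φ ↔ SatS A ψ) := by
  obtain ⟨ψ, hb, he⟩ := (dec_main hgf {Var.x} ⟨Var.x, rfl⟩ (by rw [hsen]; exact Set.empty_subset _)).toBC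
  exact ⟨ψ, hb, he⟩

end GFC
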